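/- Let W(x) = (1 - x^2)^2/4, H(r) = tanh(r/\sqrt{2}), \sigma = \int_{-1}^{1} \sqrt{W(t)/2}\, dt. There exists C > 0 such that for every \varepsilon \in (0, 1/e), setting \Lambda = 3|\log\varepsilon| and defining the even Lipschitz function \Psi(r) = H\big( (2\varepsilon\Lambda - |r|)/\varepsilon \big), one has 2 - C\varepsilon^3 \le (1/(2\sigma)) \int_{\mathbb{R}} \big( \varepsilon \Psi'(r)^2/2 + W(\Psi(r))/\varepsilon \big)\, dr \le 2 (the derivative \Psi' being taken almost everywhere). -/

import Mathlib

/-!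
The profile solves the first-order equation `H' = (1 - H²)/√2`, so the two halves of the energy
density agree (equipartition): away from `r = 0` the density equals `(1 - Ψ²)² / (2ε)`. As a function
of `s = |r| > 0` this is an exact derivative, that of `-(Ψ - Ψ³/3)/√2`, and `Ψ → -1` at infinity.
Writing `h = H(2Λ)` for the value of `Ψ` at the origin, the energy is therefore
`√2 (2/3 + h - h³/3)`, and since `σ = √2/3` the normalised energy is exactly `1 + (3h - h³)/2`.
Its deficit from `2` is `(1 - h)² (2 + h) / 2`, which is nonnegative, and which is at most
`3 ε³` because `1 - h ≤ 2 exp(-2√2 Λ) ≤ 2 ε³`.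
-/

open MeasureTheory

/-- The standard double-well potential. -/
noncomputable def W (x : ℝ) : ℝ := (1 - x ^ 2) ^ 2 / 4

/-- The one-dimensional Allen--Cahn profile. -/
noncomputable def H (r : ℝ) : ℝ := Real.tanh (r / Real.sqrt 2)

/-- A logistic form of the profile, from which its derivative and its asymptotics are read off. -/
lemma H_eq (r : ℝ) : H r = 1 - 2 / (Real.exp (√2 * r) + 1) := by
  have h2 : √2 * r = r / √2 + r / √2 := by
    have : √2 * √2 = 2 := Real.mul_self_sqrt (by norm_num)
    field_simp
    linear_combination r * this
  rw [H, Real.tanh_eq_sinh_div_cosh, Real.sinh_eq, Real.cosh_eq, h2, Real.exp_add, Real.exp_neg]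
  have := Real.exp_pos (r / √2)
  field_simp
  ring

lemma H_lt_one (r : ℝ) : H r < 1 := by
  rw [H_eq]
  have : 0 < 2 / (Real.exp (√2 * r) + 1) := by positivity
  linarith

lemma H_nonneg {r : ℝ} (hr : 0 ≤ r) : 0 ≤ H r := by
  rw [H_eq, sub_nonneg, div_le_one (by positivity)]
  have : 1 ≤ Real.exp (√2 * r) := Real.one_le_exp (by positivity)
  linarith

lemma one_sub_H_le (r : ℝ) : 1 - H r ≤ 2 * Real.exp (-(√2 * r)) := by
  rw [H_eq, Real.exp_neg, sub_sub_cancel, ← div_eq_mul_inv]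
  gcongr
  linarith

lemma hasDerivAt_H (r : ℝ) : HasDerivAt H ((1 - H r ^ 2) / √2) r := by
  have hE : HasDerivAt (fun r => Real.exp (√2 * r) + 1) (Real.exp (√2 * r) * (√2 * 1)) r :=
    (((hasDerivAt_id r).const_mul √2).exp).add_const 1
  have hpos : Real.exp (√2 * r) + 1 ≠ 0 := by positivity
  have h := ((hasDerivAt_const r (2 : ℝ)).div hE hpos).const_sub 1
  have hfun : H = fun r => 1 - 2 / (Real.exp (√2 * r) + 1) := funext H_eq
  rw [H_eq r, hfun]
  refine h.congr_deriv ?_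
  have h2 : √2 ^ 2 = 2 := Real.sq_sqrt (by norm_num)
  field_simp
  linear_combination 2 * Real.exp (√2 * r) * h2

lemma tendsto_H_atBot : Filter.Tendsto H Filter.atBot (nhds (-1)) := by
  have hfun : H = fun r => 1 - 2 / (Real.exp (√2 * r) + 1) := funext H_eq
  have hE : Filter.Tendsto (fun r : ℝ => Real.exp (√2 * r)) Filter.atBot (nhds 0) :=
    Real.tendsto_exp_atBot.comp (Filter.tendsto_id.const_mul_atBot (by positivity))
  have h := (tendsto_const_nhds (x := (2 : ℝ)).div (hE.add_const 1) (by norm_num)).const_sub 1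
  rw [show (1 : ℝ) - 2 / (0 + 1) = -1 by norm_num] at h
  rw [hfun]
  exact h

/-- The surface tension: `σ = √2 / 3`. -/
lemma sigma_eq : ∫ t in (-1 : ℝ)..1, √(W t / 2) = √2 / 3 := by
  have hcongr : ∫ t in (-1 : ℝ)..1, √(W t / 2) = ∫ t in (-1 : ℝ)..1, (1 - t ^ 2) * (√2 / 4) := by
    refine intervalIntegral.integral_congr fun t ht => ?_
    rw [Set.uIcc_of_le (by norm_num)] at ht
    have h1 : 0 ≤ 1 - t ^ 2 := by nlinarith [ht.1, ht.2]
    have h2 : √2 ^ 2 = 2 := Real.sq_sqrt (by norm_num)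
    have h3 : W t / 2 = ((1 - t ^ 2) * (√2 / 4)) ^ 2 := by
      rw [W, mul_pow, div_pow, h2]
      ring
    change √(W t / 2) = _
    rw [h3, Real.sqrt_sq (by positivity)]
  rw [hcongr, intervalIntegral.integral_mul_const, intervalIntegral.integral_sub (by simp)
    (by simp), integral_pow]
  norm_num

/-- Equipartition: away from the kink at `0`, the energy density is `(1 - Ψ²)² / (2ε)`. -/
lemma density_eq {ε Λ : ℝ} (hε : 0 < ε) {Ψ : ℝ → ℝ}
    (hΨ : ∀ r : ℝ, Ψ r = H ((2 * ε * Λ - |r|) / ε)) {r : ℝ} (hr : r ≠ 0) :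
    ε * (deriv Ψ r) ^ 2 / 2 + W (Ψ r) / ε =
      (1 - H ((2 * ε * Λ - |r|) / ε) ^ 2) ^ 2 / (2 * ε) := by
  have hin : HasDerivAt (fun r : ℝ => (2 * ε * Λ - |r|) / ε) (-(SignType.sign r : ℝ) / ε) r :=
    ((hasDerivAt_abs hr).const_sub _).div_const ε
  have hd := (hasDerivAt_H ((2 * ε * Λ - |r|) / ε)).comp r hin
  have hΨ' : Ψ = H ∘ fun r : ℝ => (2 * ε * Λ - |r|) / ε := funext hΨ
  have hs : (SignType.sign r : ℝ) ^ 2 = 1 := by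
    rcases lt_or_gt_of_ne hr with h | h <;> simp [h]
  rw [hΨ r, hΨ', hd.deriv, W]
  have h2 : √2 ^ 2 = 2 := Real.sq_sqrt (by norm_num)
  rw [mul_pow, div_pow, div_pow, neg_sq, hs, h2]
  field_simp
  ring

/-- The exact energy in terms of `h = H (2Λ)`. -/
lemma energy_eq {ε Λ : ℝ} (hε : 0 < ε) {Ψ : ℝ → ℝ}
    (hΨ : ∀ r : ℝ, Ψ r = H ((2 * ε * Λ - |r|) / ε)) :
    ∫ r : ℝ, (ε * (deriv Ψ r) ^ 2 / 2 + W (Ψ r) / ε) =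
      √2 * (2 / 3 + H (2 * Λ) - H (2 * Λ) ^ 3 / 3) := by
  have h2 : √2 ^ 2 = 2 := Real.sq_sqrt (by norm_num)
  have hae : ∫ r : ℝ, (ε * (deriv Ψ r) ^ 2 / 2 + W (Ψ r) / ε) =
      ∫ r : ℝ, (fun s => (1 - H ((2 * ε * Λ - s) / ε) ^ 2) ^ 2 / (2 * ε)) |r| := by
    refine MeasureTheory.integral_congr_ae ?_
    filter_upwards [MeasureTheory.Measure.ae_ne MeasureTheory.volume (0 : ℝ)] with r hr
    exact density_eq hε hΨ hr
  have hderiv : ∀ s : ℝ, HasDerivAt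
      (fun s => -(H ((2 * ε * Λ - s) / ε) - H ((2 * ε * Λ - s) / ε) ^ 3 / 3) / √2)
      ((1 - H ((2 * ε * Λ - s) / ε) ^ 2) ^ 2 / (2 * ε)) s := by
    intro s
    have hin : HasDerivAt (fun s : ℝ => (2 * ε * Λ - s) / ε) (-1 / ε) s :=
      ((hasDerivAt_id s).const_sub _).div_const ε
    have hd := (hasDerivAt_H ((2 * ε * Λ - s) / ε)).comp s hin
    have h := ((hd.sub ((hd.pow 3).div_const 3)).neg).div_const √2
    refine h.congr_deriv ?_
    simp only [Function.comp_apply]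
    field_simp
    rw [h2]
    push_cast
    ring
  have hin : Filter.Tendsto (fun s : ℝ => (2 * ε * Λ - s) / ε) Filter.atTop Filter.atBot :=
    (Filter.tendsto_atBot_add_const_left _ _ Filter.tendsto_neg_atTop_atBot).atBot_div_const hε
  have hH := tendsto_H_atBot.comp hin
  have hlim := ((hH.sub ((hH.pow 3).div_const 3)).neg).div_const √2
  rw [hae, integral_comp_abs
    (f := fun s => (1 - H ((2 * ε * Λ - s) / ε) ^ 2) ^ 2 / (2 * ε)), MeasureTheory.integral_Ioi_of_hasDerivAt_of_nonneg'
    (fun s _ => hderiv s) (fun s _ => by positivity) hlim]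
  have h0 : (2 * ε * Λ - 0) / ε = 2 * Λ := by field_simp; ring
  rw [h0]
  field_simp
  rw [h2]
  ring

theorem double_profile_energy_estimate :
    ∃ C : ℝ, 0 < C ∧ ∀ ε : ℝ, 0 < ε → ε < 1 / Real.exp 1 →
      ∀ Λ : ℝ, Λ = 3 * |Real.log ε| →
      ∀ Ψ : ℝ → ℝ, (∀ r : ℝ, Ψ r = H ((2 * ε * Λ - |r|) / ε)) →
        2 - C * ε ^ 3 ≤
            (1 / (2 * (∫ t in (-1 : ℝ)..1, Real.sqrt (W t / 2)))) *
              ∫ r : ℝ, (ε * (deriv Ψ r) ^ 2 / 2 + W (Ψ r) / ε) ∧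
          (1 / (2 * (∫ t in (-1 : ℝ)..1, Real.sqrt (W t / 2)))) *
              (∫ r : ℝ, (ε * (deriv Ψ r) ^ 2 / 2 + W (Ψ r) / ε)) ≤ 2 := by
  refine ⟨3, by norm_num, fun ε hε _ Λ hΛ Ψ hΨ => ?_⟩
  rw [sigma_eq, energy_eq hε hΨ]
  have hΛ0 : 0 ≤ Λ := hΛ ▸ by positivity
  have hlt := H_lt_one (2 * Λ)
  have hnn := H_nonneg (r := 2 * Λ) (by positivity)
  have hclose : 1 - H (2 * Λ) ≤ 2 * ε ^ 3 := by
    refine (one_sub_H_le _).trans ?_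
    have hpow : ε ^ 3 = Real.exp (3 * Real.log ε) := by
      rw [mul_comm, Real.exp_mul, Real.exp_log hε]
      norm_cast
    rw [hpow]
    gcongr
    have h1 : 1 ≤ √2 := Real.one_le_sqrt.mpr (by norm_num)
    have h3 := neg_abs_le (Real.log ε)
    nlinarith
  generalize H (2 * Λ) = h at *
  have hval : 1 / (2 * (√2 / 3)) * (√2 * (2 / 3 + h - h ^ 3 / 3)) = 1 + (3 * h - h ^ 3) / 2 := by
    field_simp
    ring
  rw [hval]
  have hdef : 2 - (1 + (3 * h - h ^ 3) / 2) = (1 - h) ^ 2 * (2 + h) / 2 := by ring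
  have hdef0 : 0 ≤ (1 - h) ^ 2 * (2 + h) / 2 := by positivity
  -- As `0 ≤ h ≤ 1`, one factor `1 - h` and the factor `2 + h` are bounded by `1` and `3`.
  have hdef1 : (1 - h) ^ 2 * (2 + h) / 2 ≤ 3 / 2 * (1 - h) := by
    have : 0 ≤ (1 - h) * (1 + h + h ^ 2) := mul_nonneg (by linarith) (by positivity)
    nlinarith
  constructor <;> linarith
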